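/- Let λ ∈ ℝ. The function f_λ(x) = [ψ'(x)]² + ψ''(x) − (x² + λx + 12)/(12x⁴(x+1)²) is completely monotonic on (0,∞) if and only if λ ≤ 0. -/

import Mathlib

/-- The digamma function `ψ(x) = Γ'(x)/Γ(x)`. -/
noncomputable def digamma (x : ℝ) : ℝ := deriv Real.Gamma x / Real.Gamma x

/-- A function is completely monotonic on a set `s` if it has derivatives of all
orders there and `(-1)^n f^(n)(x) ≥ 0` for all `x ∈ s` and all `n ≥ 0`. -/
def CompletelyMonotonicOn (f : ℝ → ℝ) (s : Set ℝ) : Prop :=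
  ContDiffOn ℝ (⊤ : ℕ∞) f s ∧
    ∀ n : ℕ, ∀ x ∈ s, 0 ≤ (-1 : ℝ) ^ n * iteratedDerivWithin n f s x

/-!
Put `f₀ = (ψ')² + ψ'' - (x² + 12) / (12 x⁴ (x + 1)²)`, so that
`f_λ = f₀ + (-λ / 12) / (x³ (x + 1)²)`. Since `x³ f₀(x) → 0` as `x → 0⁺`, nonnegativity of `f_λ`
alone forces `λ ≤ 0`; conversely, for `λ ≤ 0` the second summand is completely monotonic, and it
remains to see that `f₀` is.

If `F` is a difference of two completely monotonic functions tending to `0` at infinity, then all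
derivatives of `F` tend to `0` as well; if moreover `F(x) - F(x + 1)` is completely monotonic, then
telescoping each derivative shows that so is `F`. By `ψ'(x) - ψ'(x + 1) = 1 / x²` and
`ψ''(x) - ψ''(x + 1) = -2 / x³`, one has `f₀(x) - f₀(x + 1) = (2 / x²) v(x)` where `v` is `ψ'` plus
a rational function. The difference `v(x) - v(x + 1)` is rational, and it turns out to be a
polynomial with nonnegative coefficients in `1 / (x + 1)`, `1 / (x + 2)` and `1 / (x + 3)`.
-/

open Set Filter
open scoped Topology

theorem hasDerivAt_inv_add_pow (n : ℕ) {x b : ℝ} (h : x + b ≠ 0) :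
    HasDerivAt (fun y => ((y + b) ^ n)⁻¹) (-(n * ((x + b) ^ (n + 1))⁻¹)) x := by
  have hzpow := (hasDerivAt_zpow (-n) (x + b) (Or.inl h)).comp_add_const x b
  simp only [zpow_neg, zpow_natCast] at hzpow
  refine hzpow.congr_deriv ?_
  rw [show (-n - 1 : ℤ) = -(n + 1 : ℕ) by push_cast; ring, zpow_neg, zpow_natCast, Int.cast_neg,
    Int.cast_natCast, neg_mul]

theorem nonneg_of_le_of_tendsto_zero {u : ℝ → ℝ} {a c : ℝ} (hc : 0 < c)
    (hu : ∀ x ∈ Ioi a, u (x + c) ≤ u x) (h0 : Tendsto u atTop (𝓝 0)) {x : ℝ} (hx : x ∈ Ioi a) :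
    0 ≤ u x := by
  have hanti : Antitone fun n : ℕ => u (x + n * c) := antitone_nat_of_succ_le fun n => by
    have hmem : x + n * c ∈ Ioi a := lt_add_of_lt_of_nonneg hx (show 0 ≤ n * c by positivity)
    rw [Nat.cast_succ, add_one_mul, ← add_assoc]
    exact hu _ hmem
  have hlim : Tendsto (fun n : ℕ => u (x + n * c)) atTop (𝓝 0) :=
    h0.comp (tendsto_atTop_add_const_left _ x (tendsto_natCast_atTop_atTop.atTop_mul_const hc))
  simpa using hanti.le_of_tendsto hlim 0

theorem iteratedDerivWithin_Ioi_comp_add_const (f : ℝ → ℝ) (n : ℕ) {a c x : ℝ} (hc : 0 ≤ c)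
    (hx : x ∈ Ioi a) :
    iteratedDerivWithin n (fun y => f (y + c)) (Ioi a) x =
      iteratedDerivWithin n f (Ioi a) (x + c) := by
  rw [iteratedDerivWithin_of_isOpen isOpen_Ioi hx, iteratedDeriv_comp_add_const,
    iteratedDerivWithin_of_isOpen isOpen_Ioi (lt_add_of_lt_of_nonneg hx hc)]

namespace CompletelyMonotonicOn

variable {f g : ℝ → ℝ} {s : Set ℝ}

theorem nonneg (hf : CompletelyMonotonicOn f s) {x : ℝ} (hx : x ∈ s) : 0 ≤ f x := by
  simpa using hf.2 0 x hx

theorem contDiffWithinAt (hf : CompletelyMonotonicOn f s) (n : ℕ) {x : ℝ} (hx : x ∈ s) :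
    ContDiffWithinAt ℝ n f s x :=
  (hf.1 x hx).of_le (by exact_mod_cast le_top)

theorem congr (hf : CompletelyMonotonicOn f s) (h : EqOn g f s) : CompletelyMonotonicOn g s :=
  ⟨hf.1.congr h, fun n x hx => by rw [iteratedDerivWithin_congr h hx]; exact hf.2 n x hx⟩

theorem const {c : ℝ} (hc : 0 ≤ c) : CompletelyMonotonicOn (fun _ => c) s := by
  refine ⟨contDiffOn_const, fun n x _ => ?_⟩
  cases n with
  | zero => simpa using hc
  | succ n => simp [iteratedDerivWithin_const]

theorem add (hs : UniqueDiffOn ℝ s) (hf : CompletelyMonotonicOn f s)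
    (hg : CompletelyMonotonicOn g s) : CompletelyMonotonicOn (fun x => f x + g x) s := by
  refine ⟨hf.1.add hg.1, fun n x hx => ?_⟩
  rw [iteratedDerivWithin_fun_add hx hs (hf.contDiffWithinAt n hx) (hg.contDiffWithinAt n hx),
    mul_add]
  exact add_nonneg (hf.2 n x hx) (hg.2 n x hx)

theorem mul (hs : UniqueDiffOn ℝ s) (hf : CompletelyMonotonicOn f s)
    (hg : CompletelyMonotonicOn g s) : CompletelyMonotonicOn (fun x => f x * g x) s := by
  refine ⟨hf.1.mul hg.1, fun n x hx => ?_⟩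
  change 0 ≤ (-1) ^ n * iteratedDerivWithin n (f * g) s x
  rw [iteratedDerivWithin_mul hx hs (hf.contDiffWithinAt n hx) (hg.contDiffWithinAt n hx),
    Finset.mul_sum]
  refine Finset.sum_nonneg fun i hi => ?_
  have hsign : (-1 : ℝ) ^ n = (-1) ^ i * (-1) ^ (n - i) := by
    rw [← pow_add, Nat.add_sub_cancel' (Finset.mem_range_succ_iff.mp hi)]
  calc (0 : ℝ) ≤ n.choose i * ((-1) ^ i * iteratedDerivWithin i f s x) *
        ((-1) ^ (n - i) * iteratedDerivWithin (n - i) g s x) :=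
      mul_nonneg (mul_nonneg (Nat.cast_nonneg _) (hf.2 i x hx)) (hg.2 (n - i) x hx)
    _ = _ := by rw [hsign]; ring

theorem neg_derivWithin (hs : UniqueDiffOn ℝ s) (hf : CompletelyMonotonicOn f s) :
    CompletelyMonotonicOn (fun x => -derivWithin f s x) s := by
  refine ⟨(hf.1.derivWithin hs (by simp)).neg, fun n x hx => ?_⟩
  have h := hf.2 (n + 1) x hx
  rw [iteratedDerivWithin_succ'] at h
  rw [iteratedDerivWithin_fun_neg]
  linear_combination h

theorem of_hasDerivWithinAt (hs : UniqueDiffOn ℝ s) {G : ℕ → ℝ → ℝ} {c : ℕ → ℝ}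
    (hc : ∀ m, 0 ≤ c m) (hG : ∀ m, ∀ x ∈ s, 0 ≤ G m x)
    (hderiv : ∀ m, ∀ x ∈ s, HasDerivWithinAt (G m) (-(c m * G (m + 1) x)) s x) (m : ℕ) :
    CompletelyMonotonicOn (G m) s := by
  have hderivWithin : ∀ m, EqOn (derivWithin (G m) s) (fun x => -c m * G (m + 1) x) s :=
    fun m x hx => by simp only [(hderiv m x hx).derivWithin (hs x hx), neg_mul]
  refine ⟨contDiffOn_infty.mpr fun n => ?_, fun n => ?_⟩
  · induction n generalizing m with
    | zero => exact contDiffOn_zero.mpr fun x hx => (hderiv m x hx).continuousWithinAt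
    | succ n ih =>
      refine (contDiffOn_succ_iff_derivWithin hs).mpr
        ⟨fun x hx => (hderiv m x hx).differentiableWithinAt,
          fun h => absurd h (WithTop.natCast_ne_top n), ?_⟩
      exact (contDiffOn_const.mul (ih (m + 1))).congr (hderivWithin m)
  · induction n generalizing m with
    | zero => simpa using hG m
    | succ n ih =>
      intro x hx
      rw [iteratedDerivWithin_succ', iteratedDerivWithin_congr (hderivWithin m) hx,
        iteratedDerivWithin_const_mul_field]
      linear_combination mul_nonneg (hc m) (ih (m + 1) x hx)

variable {a : ℝ}

theorem div_add_pow (hf : CompletelyMonotonicOn f (Ioi a)) {b : ℝ} (hb : -b ≤ a) (n : ℕ) :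
    CompletelyMonotonicOn (fun x => f x / (x + b) ^ n) (Ioi a) := by
  have hpos : ∀ x ∈ Ioi a, 0 < x + b := fun x hx => by linarith [mem_Ioi.mp hx]
  have hinv : CompletelyMonotonicOn (fun x => ((x + b) ^ n)⁻¹) (Ioi a) :=
    of_hasDerivWithinAt (uniqueDiffOn_Ioi a) (G := fun m x => ((x + b) ^ (n + m))⁻¹)
      (c := fun m => (n + m : ℕ)) (fun m => by positivity)
      (fun m x hx => (inv_pos.mpr (pow_pos (hpos x hx) _)).le)
      (fun m x hx => (hasDerivAt_inv_add_pow (n + m) (hpos x hx).ne').hasDerivWithinAt) 0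
  exact (hf.mul (uniqueDiffOn_Ioi a) hinv).congr fun x _ => div_eq_mul_inv _ _

theorem div_pow (hf : CompletelyMonotonicOn f (Ioi a)) (ha : 0 ≤ a) (n : ℕ) :
    CompletelyMonotonicOn (fun x => f x / x ^ n) (Ioi a) := by
  simpa only [add_zero] using hf.div_add_pow (neg_zero.trans_le ha) n

theorem antitoneOn (hf : CompletelyMonotonicOn f (Ioi a)) : AntitoneOn f (Ioi a) := by
  refine antitoneOn_of_deriv_nonpos (convex_Ioi a) hf.1.continuousOn
    ((hf.1.differentiableOn (by simp)).mono interior_subset) fun x hx => ?_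
  rw [interior_Ioi] at hx
  have h := (hf.neg_derivWithin (uniqueDiffOn_Ioi a)).nonneg hx
  rw [derivWithin_of_isOpen isOpen_Ioi hx] at h
  linarith

end CompletelyMonotonicOn

/-- Completely monotonic functions on `(a, ∞)` that tend to zero at infinity: those which
telescoping along arithmetic progressions recovers from their differences. -/
structure IsVanishingCM (f : ℝ → ℝ) (a : ℝ) : Prop where
  completelyMonotonicOn : CompletelyMonotonicOn f (Ioi a)
  tendsto_atTop : Tendsto f atTop (𝓝 0)

namespace IsVanishingCM

variable {f g : ℝ → ℝ} {a : ℝ}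

theorem add (hf : IsVanishingCM f a) (hg : IsVanishingCM g a) :
    IsVanishingCM (fun x => f x + g x) a :=
  ⟨hf.1.add (uniqueDiffOn_Ioi a) hg.1, by simpa only [add_zero] using hf.2.add hg.2⟩

theorem mul (hf : CompletelyMonotonicOn f (Ioi a)) (hg : IsVanishingCM g a) :
    IsVanishingCM (fun x => f x * g x) a := by
  refine ⟨hf.mul (uniqueDiffOn_Ioi a) hg.1, bdd_le_mul_tendsto_zero' (f (a + 1)) ?_ hg.2⟩
  filter_upwards [eventually_ge_atTop (a + 1)] with x hx
  have hxa : x ∈ Ioi a := (lt_add_one a).trans_le hx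
  rw [abs_of_nonneg (hf.nonneg hxa)]
  exact hf.antitoneOn (lt_add_one a) hxa hx

theorem div_add_pow (hf : CompletelyMonotonicOn f (Ioi a)) {b : ℝ} (hb : -b ≤ a) {n : ℕ}
    (hn : n ≠ 0) : IsVanishingCM (fun x => f x / (x + b) ^ n) a := by
  have hpow : Tendsto (fun x : ℝ => (x + b) ^ n) atTop atTop :=
    (tendsto_pow_atTop hn).comp (tendsto_atTop_add_const_right _ b tendsto_id)
  simpa only [mul_one_div] using mul hf
    ⟨(CompletelyMonotonicOn.const zero_le_one).div_add_pow hb n, hpow.const_div_atTop 1⟩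

theorem div_pow (hf : CompletelyMonotonicOn f (Ioi a)) (ha : 0 ≤ a) {n : ℕ} (hn : n ≠ 0) :
    IsVanishingCM (fun x => f x / x ^ n) a := by
  simpa only [add_zero] using div_add_pow hf (neg_zero.trans_le ha) hn

theorem neg_derivWithin (hf : IsVanishingCM f a) :
    IsVanishingCM (fun x => -derivWithin f (Ioi a) x) a := by
  obtain ⟨hcm, h0⟩ := hf
  have hcm' := hcm.neg_derivWithin (uniqueDiffOn_Ioi a)
  refine ⟨hcm', ?_⟩
  have hshift : Tendsto (fun x => f (x - 1) - f x) atTop (𝓝 0) := by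
    simpa [← sub_eq_add_neg] using
      (h0.comp (tendsto_atTop_add_const_right _ (-1) tendsto_id)).sub h0
  refine tendsto_of_tendsto_of_tendsto_of_le_of_le' tendsto_const_nhds hshift ?_ ?_
  · filter_upwards [eventually_gt_atTop a] with x hx using hcm'.nonneg hx
  · filter_upwards [eventually_gt_atTop (a + 1)] with x hx
    have hsub : Icc (x - 1) x ⊆ Ioi a := fun y hy => lt_of_lt_of_le (by linarith) hy.1
    obtain ⟨y, hy, hslope⟩ := exists_deriv_eq_slope f (sub_one_lt x)
      (hcm.1.continuousOn.mono hsub)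
      ((hcm.1.differentiableOn (by simp)).mono (Ioo_subset_Icc_self.trans hsub))
    have hya : y ∈ Ioi a := hsub (Ioo_subset_Icc_self hy)
    calc -derivWithin f (Ioi a) x ≤ -derivWithin f (Ioi a) y :=
          hcm'.antitoneOn hya (hsub (right_mem_Icc.mpr (sub_one_lt x).le)) hy.2.le
      _ = f (x - 1) - f x := by
          rw [derivWithin_of_isOpen isOpen_Ioi hya, hslope, sub_sub_cancel, div_one, neg_sub]

theorem tendsto_iteratedDerivWithin (hf : IsVanishingCM f a) (n : ℕ) :
    Tendsto (iteratedDerivWithin n f (Ioi a)) atTop (𝓝 0) := by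
  induction n generalizing f with
  | zero => simpa using hf.2
  | succ n ih =>
    have h := (ih hf.neg_derivWithin).neg
    rw [neg_zero] at h
    refine h.congr fun x => ?_
    rw [iteratedDerivWithin_succ', iteratedDerivWithin_fun_neg, neg_neg]

end IsVanishingCM

theorem CompletelyMonotonicOn.of_sub_comp_add_const {F f g : ℝ → ℝ} {a c : ℝ}
    (hf : IsVanishingCM f a) (hg : IsVanishingCM g a) (hF : EqOn F (f - g) (Ioi a)) (hc : 0 < c)
    (h : CompletelyMonotonicOn (fun x => F x - F (x + c)) (Ioi a)) :
    CompletelyMonotonicOn F (Ioi a) := by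
  have hcd : ContDiffOn ℝ (⊤ : ℕ∞) F (Ioi a) := (hf.1.1.sub hg.1.1).congr hF
  refine ⟨hcd, fun n x hx => ?_⟩
  have hdecay : Tendsto (fun x => (-1) ^ n * iteratedDerivWithin n F (Ioi a) x) atTop (𝓝 0) := by
    have hsub := ((hf.tendsto_iteratedDerivWithin n).sub
      (hg.tendsto_iteratedDerivWithin n)).const_mul ((-1 : ℝ) ^ n)
    rw [sub_zero, mul_zero] at hsub
    refine hsub.congr' ?_
    filter_upwards [Ioi_mem_atTop a] with y hy
    rw [iteratedDerivWithin_congr hF hy, iteratedDerivWithin_sub hy (uniqueDiffOn_Ioi a)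
      (hf.1.contDiffWithinAt n hy) (hg.1.contDiffWithinAt n hy)]
  refine nonneg_of_le_of_tendsto_zero hc (fun y hy => ?_) hdecay hx
  have hmaps : MapsTo (· + c) (Ioi a) (Ioi a) := fun z hz => lt_add_of_lt_of_nonneg hz hc.le
  have hcd_shift : ContDiffOn ℝ (⊤ : ℕ∞) (fun z => F (z + c)) (Ioi a) :=
    hcd.comp (contDiff_id.add contDiff_const).contDiffOn hmaps
  have hn : ((n : ℕ∞) : WithTop ℕ∞) ≤ (⊤ : ℕ∞) := by exact_mod_cast le_top
  have hy' := h.2 n y hy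
  change 0 ≤ (-1) ^ n * iteratedDerivWithin n (F - fun z => F (z + c)) (Ioi a) y at hy'
  rw [iteratedDerivWithin_sub hy (uniqueDiffOn_Ioi a) ((hcd y hy).of_le hn)
    ((hcd_shift y hy).of_le hn), iteratedDerivWithin_Ioi_comp_add_const _ _ hc.le hy] at hy'
  linarith

/-- The Hurwitz zeta function `ζ(s, x)` at a natural number `s`, so that
`ψ⁽ᵐ⁾(x) = (-1)^(m+1) m! ζ(m + 1, x)` for `0 < m` and `0 < x`. Junk for `s ≤ 1`, where the series
does not converge. -/
noncomputable def hurwitzSum (s : ℕ) (x : ℝ) : ℝ := ∑' k : ℕ, ((x + k) ^ s)⁻¹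

section HurwitzSum

variable {s : ℕ} {x : ℝ}

theorem summable_inv_add_pow (hs : 1 < s) (hx : 0 < x) :
    Summable fun k : ℕ => ((x + k) ^ s)⁻¹ := by
  refine ((Real.summable_one_div_nat_add_rpow x s).mpr (by exact_mod_cast hs)).congr fun k => ?_
  rw [abs_of_pos (by positivity), Real.rpow_natCast, one_div, add_comm]

theorem hurwitzSum_eq_inv_pow_add (hs : 1 < s) (hx : 0 < x) :
    hurwitzSum s x = (x ^ s)⁻¹ + hurwitzSum s (x + 1) := by
  rw [hurwitzSum, (summable_inv_add_pow hs hx).tsum_eq_zero_add, hurwitzSum]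
  simp only [Nat.cast_zero, add_zero, Nat.cast_add, Nat.cast_one, add_assoc, add_comm (1 : ℝ)]

theorem tendsto_hurwitzSum_atTop (hs : 1 < s) : Tendsto (hurwitzSum s) atTop (𝓝 0) := by
  have hterm : ∀ k : ℕ, Tendsto (fun x : ℝ => ((x + k) ^ s)⁻¹) atTop (𝓝 0) := fun k =>
    ((tendsto_pow_atTop (by lia)).comp
      (tendsto_atTop_add_const_right _ (k : ℝ) tendsto_id)).inv_tendsto_atTop
  have hbound : ∀ᶠ x : ℝ in atTop, ∀ k : ℕ, ‖((x + k) ^ s)⁻¹‖ ≤ ((1 + k : ℝ) ^ s)⁻¹ := by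
    filter_upwards [eventually_ge_atTop 1] with x hx k
    rw [Real.norm_of_nonneg (by positivity)]
    gcongr
  rw [← tsum_zero (α := ℝ) (β := ℕ)]
  exact tendsto_tsum_of_dominated_convergence (summable_inv_add_pow hs one_pos) hterm hbound

/-- The constants `C k` make the series converge for `s = 1`, where it is `-ψ` up to a constant. -/
theorem hasDerivAt_tsum_const_add_inv_add_pow (hs : s ≠ 0) {C : ℕ → ℝ} (hx : 0 < x)
    (hC : Summable fun k : ℕ => C k + ((x + k) ^ s)⁻¹) :
    HasDerivAt (fun y : ℝ => ∑' k : ℕ, (C k + ((y + k) ^ s)⁻¹))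
      (-(s * hurwitzSum (s + 1) x)) x := by
  have hx2 : 0 < x / 2 := half_pos hx
  have hpos : ∀ k : ℕ, ∀ y ∈ Ioi (x / 2), 0 < y + k := fun k y hy =>
    add_pos_of_pos_of_nonneg (hx2.trans hy) k.cast_nonneg
  rw [hurwitzSum, ← tsum_mul_left, ← tsum_neg]
  refine hasDerivAt_tsum_of_isPreconnected
    ((summable_inv_add_pow (by lia : 1 < s + 1) hx2).mul_left (s : ℝ)) isOpen_Ioi isPreconnected_Ioi
    (fun k y hy => (hasDerivAt_inv_add_pow s (hpos k y hy).ne').const_add (C k))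
    (fun k y hy => ?_) (half_lt_self hx) hC (half_lt_self hx)
  have hk : 0 < y + k := hpos k y hy
  rw [norm_neg, Real.norm_of_nonneg (by positivity)]
  gcongr
  exact (mem_Ioi.mp hy).le

theorem hasDerivAt_hurwitzSum (hs : 1 < s) (hx : 0 < x) :
    HasDerivAt (hurwitzSum s) (-(s * hurwitzSum (s + 1) x)) x := by
  have h := hasDerivAt_tsum_const_add_inv_add_pow (C := fun _ => 0) (show s ≠ 0 by lia) hx
    (by simpa only [zero_add] using summable_inv_add_pow hs hx)
  simp only [zero_add] at h
  exact h

theorem completelyMonotonicOn_hurwitzSum (hs : 1 < s) :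
    CompletelyMonotonicOn (hurwitzSum s) (Ioi 0) :=
  CompletelyMonotonicOn.of_hasDerivWithinAt (uniqueDiffOn_Ioi 0)
    (G := fun m => hurwitzSum (s + m)) (c := fun m => (s + m : ℕ)) (fun m => Nat.cast_nonneg _)
    (fun m x hx => tsum_nonneg fun k => by have := mem_Ioi.mp hx; positivity)
    (fun m x hx => (hasDerivAt_hurwitzSum (by lia) hx).hasDerivWithinAt) 0

theorem isVanishingCM_hurwitzSum (hs : 1 < s) : IsVanishingCM (hurwitzSum s) 0 :=
  ⟨completelyMonotonicOn_hurwitzSum hs, tendsto_hurwitzSum_atTop hs⟩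

end HurwitzSum

section Digamma

variable {x : ℝ}

theorem hasDerivAt_log_Gamma (hx : 0 < x) :
    HasDerivAt (Real.log ∘ Real.Gamma) (digamma x) x :=
  ((Real.differentiableOn_Gamma_Ioi.differentiableAt (Ioi_mem_nhds hx)).hasDerivAt).log
    (Real.Gamma_pos_of_pos hx).ne'

theorem log_Gamma_add_one (hx : 0 < x) :
    (Real.log ∘ Real.Gamma) (x + 1) = (Real.log ∘ Real.Gamma) x + Real.log x := by
  simp only [Function.comp_apply]
  rw [Real.Gamma_add_one hx.ne', Real.log_mul hx.ne' (Real.Gamma_pos_of_pos hx).ne', add_comm]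

theorem digamma_add_one (hx : 0 < x) : digamma (x + 1) = digamma x + x⁻¹ := by
  have hleft := (hasDerivAt_log_Gamma (add_pos hx one_pos)).comp_add_const x 1
  have hright := (hasDerivAt_log_Gamma hx).add (Real.hasDerivAt_log hx.ne')
  refine hleft.unique (hright.congr_of_eventuallyEq ?_)
  filter_upwards [Ioi_mem_nhds hx] with y hy using log_Gamma_add_one hy

theorem digamma_add_natCast (hx : 0 < x) (n : ℕ) :
    digamma (x + n) = digamma x + ∑ k ∈ Finset.range n, (x + k)⁻¹ := by
  induction n with
  | zero => simp
  | succ n ih =>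
    rw [Finset.sum_range_succ, ← add_assoc, ← ih, ← digamma_add_one (by positivity)]
    push_cast
    rw [add_assoc]

theorem digamma_le_log (hx : 0 < x) : digamma x ≤ Real.log x := by
  have h := Real.convexOn_log_Gamma.le_slope_of_hasDerivAt hx (add_pos hx one_pos : 0 < x + 1)
    (lt_add_one x) (hasDerivAt_log_Gamma hx)
  rw [slope_def_field, log_Gamma_add_one hx] at h
  simpa using h

theorem log_sub_inv_le_digamma (hx : 0 < x) : Real.log x - x⁻¹ ≤ digamma x := by
  have hx1 : 0 < x + 1 := add_pos hx one_pos
  have h := Real.convexOn_log_Gamma.slope_le_of_hasDerivAt hx hx1 (lt_add_one x)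
    (hasDerivAt_log_Gamma hx1)
  rw [slope_def_field, log_Gamma_add_one hx, digamma_add_one hx] at h
  simpa using h

theorem tendsto_digamma_sub_log : Tendsto (fun x => digamma x - Real.log x) atTop (𝓝 0) := by
  have hlower : Tendsto (fun x : ℝ => -x⁻¹) atTop (𝓝 0) := by
    simpa using (tendsto_inv_atTop_zero (𝕜 := ℝ)).neg
  refine tendsto_of_tendsto_of_tendsto_of_le_of_le' hlower tendsto_const_nhds ?_ ?_
  · filter_upwards [eventually_gt_atTop 0] with x hx
    linarith [log_sub_inv_le_digamma hx]
  · filter_upwards [eventually_gt_atTop 0] with x hx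
    linarith [digamma_le_log hx]

theorem tendsto_digamma_add_natCast_sub_log (x : ℝ) :
    Tendsto (fun n : ℕ => digamma (x + n) - Real.log n) atTop (𝓝 0) := by
  have hdigamma := tendsto_digamma_sub_log.comp
    (tendsto_atTop_add_const_left atTop x (tendsto_natCast_atTop_atTop (R := ℝ)))
  have hlog := (Real.tendsto_log_comp_add_sub_log x).comp (tendsto_natCast_atTop_atTop (R := ℝ))
  simpa [Function.comp_def, add_comm x] using hdigamma.add hlog

theorem summable_inv_add_sub_inv_add {y : ℝ} (hx : 0 < x) (hy : 0 < y) :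
    Summable fun k : ℕ => (x + k)⁻¹ - (y + k)⁻¹ := by
  have hmin : 0 < min x y := lt_min hx hy
  refine Summable.of_norm_bounded ((summable_inv_add_pow one_lt_two hmin).mul_left |y - x|)
    fun k => ?_
  have hxk : 0 < x + k := by positivity
  have hyk : 0 < y + k := by positivity
  rw [inv_sub_inv hxk.ne' hyk.ne', add_sub_add_right_eq_sub, norm_div, Real.norm_eq_abs,
    Real.norm_of_nonneg (by positivity), div_eq_mul_inv, sq]
  gcongr
  · exact min_le_left x y
  · exact min_le_right x y

theorem hasSum_digamma_sub_digamma {y : ℝ} (hx : 0 < x) (hy : 0 < y) :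
    HasSum (fun k : ℕ => (x + k)⁻¹ - (y + k)⁻¹) (digamma y - digamma x) := by
  refine (summable_inv_add_sub_inv_add hx hy).hasSum_iff_tendsto_nat.mpr ?_
  have h := ((tendsto_digamma_add_natCast_sub_log x).sub
    (tendsto_digamma_add_natCast_sub_log y)).const_add (digamma y - digamma x)
  rw [sub_zero, add_zero] at h
  refine h.congr fun n => ?_
  rw [digamma_add_natCast hx, digamma_add_natCast hy, Finset.sum_sub_distrib]
  ring

theorem hasDerivAt_digamma (hx : 0 < x) : HasDerivAt digamma (hurwitzSum 2 x) x := by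
  have hsum : ∀ y ∈ Ioi (0 : ℝ),
      HasSum (fun k : ℕ => -(1 + k : ℝ)⁻¹ + ((y + k) ^ 1)⁻¹) (digamma 1 - digamma y) :=
    fun y hy => by
      simpa only [pow_one, neg_add_eq_sub] using hasSum_digamma_sub_digamma hy one_pos
  have h := (hasDerivAt_tsum_const_add_inv_add_pow one_ne_zero hx (hsum x hx).summable).const_sub
    (digamma 1)
  rw [Nat.cast_one, one_mul, neg_neg] at h
  refine h.congr_of_eventuallyEq ?_
  filter_upwards [Ioi_mem_nhds hx] with y hy
  rw [(hsum y hy).tsum_eq, sub_sub_cancel]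

theorem deriv_digamma (hx : 0 < x) : deriv digamma x = hurwitzSum 2 x :=
  (hasDerivAt_digamma hx).deriv

theorem deriv_deriv_digamma (hx : 0 < x) : deriv (deriv digamma) x = -2 * hurwitzSum 3 x := by
  have h : deriv digamma =ᶠ[𝓝 x] hurwitzSum 2 := by
    filter_upwards [Ioi_mem_nhds hx] with y hy using deriv_digamma hy
  rw [h.deriv_eq, (hasDerivAt_hurwitzSum one_lt_two hx).deriv, Nat.cast_ofNat, neg_mul]

end Digamma

/-- The function `f₀ = (ψ')² + ψ'' - (x² + 12) / (12 x⁴ (x + 1)²)` of the critical case `λ = 0`,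
for `0 < x`. -/
noncomputable def criticalFun (x : ℝ) : ℝ :=
  hurwitzSum 2 x ^ 2 - 2 * hurwitzSum 3 x - (x ^ 2 + 12) / (12 * x ^ 4 * (x + 1) ^ 2)

/-- The factor `v` in `f₀(x) - f₀(x + 1) = (2 / x²) v(x)`, where `f₀` is `criticalFun`. -/
noncomputable def shiftFactor (x : ℝ) : ℝ :=
  hurwitzSum 2 x - 1 / x - 1 / (2 * x ^ 2) - (x ^ 2 + 12) / (24 * x ^ 2 * (x + 1) ^ 2) +
    x ^ 2 * ((x + 1) ^ 2 + 12) / (24 * (x + 1) ^ 4 * (x + 2) ^ 2)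

section Critical

variable {x : ℝ}

theorem criticalFun_sub_comp_add_one (hx : 0 < x) :
    criticalFun x - criticalFun (x + 1) = 2 / x ^ 2 * shiftFactor x := by
  rw [criticalFun, criticalFun, shiftFactor, hurwitzSum_eq_inv_pow_add one_lt_two hx,
    hurwitzSum_eq_inv_pow_add (by norm_num : 1 < 3) hx]
  field_simp
  ring

-- The exponents `1` give every summand the shape of `CompletelyMonotonicOn.div_add_pow`.
theorem shiftFactor_sub_comp_add_one (hx : 0 < x) :
    shiftFactor x - shiftFactor (x + 1) =
      1 / 6 * (((48 / (x + 1) ^ 4 + 96 / (x + 1) ^ 3 + 24 / (x + 1) ^ 2 + 8 / (x + 1) ^ 1 + 29)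
          / (x + 2) ^ 4 + 56 / (x + 2) ^ 3 + 54 / (x + 2) ^ 2 + 20 / (x + 2) ^ 1)
        / (x + 3) ^ 4) := by
  rw [shiftFactor, shiftFactor, hurwitzSum_eq_inv_pow_add one_lt_two hx]
  field_simp
  ring

theorem shiftFactor_eq_sub (hx : 0 < x) :
    shiftFactor x =
      (hurwitzSum 2 x + (1 / 24 + 13 / 24 / (x + 1) ^ 2 + 1 / 2 / (x + 1) ^ 4) / (x + 2) ^ 2) -
      (1 / x ^ 1 + 1 / 2 / x ^ 2 + (1 / 24 + 1 / 2 / x ^ 2) / (x + 1) ^ 2 +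
        (1 / 12 / (x + 1) ^ 1 + 1 / (x + 1) ^ 3) / (x + 2) ^ 2) := by
  rw [shiftFactor]
  field_simp
  ring

theorem completelyMonotonicOn_shiftFactor : CompletelyMonotonicOn shiftFactor (Ioi 0) := by
  refine .of_sub_comp_add_const ?_ ?_ (fun x hx => shiftFactor_eq_sub hx) one_pos
    (.congr ?_ fun x hx => shiftFactor_sub_comp_add_one hx)
  all_goals
    with_reducible repeat' first
      | exact isVanishingCM_hurwitzSum one_lt_two
      | apply IsVanishingCM.add
      | apply IsVanishingCM.div_pow
      | apply IsVanishingCM.div_add_pow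
      | apply CompletelyMonotonicOn.const
      | apply CompletelyMonotonicOn.add (uniqueDiffOn_Ioi 0)
      | apply CompletelyMonotonicOn.mul (uniqueDiffOn_Ioi 0)
      | apply CompletelyMonotonicOn.div_pow
      | apply CompletelyMonotonicOn.div_add_pow
    all_goals norm_num

theorem criticalFun_eq_sub (hx : 0 < x) :
    criticalFun x =
      hurwitzSum 2 x * hurwitzSum 2 x -
      (2 * hurwitzSum 3 x + (1 / 12 / x ^ 2 + 1 / x ^ 4) / (x + 1) ^ 2) := by
  rw [criticalFun]
  field_simp
  ring

theorem completelyMonotonicOn_criticalFun : CompletelyMonotonicOn criticalFun (Ioi 0) := by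
  have hζ₂ : IsVanishingCM (hurwitzSum 2) 0 := isVanishingCM_hurwitzSum one_lt_two
  have hζ₃ : IsVanishingCM (hurwitzSum 3) 0 := isVanishingCM_hurwitzSum (by norm_num)
  refine .of_sub_comp_add_const (.mul hζ₂.1 hζ₂) (.add (.mul (.const zero_le_two) hζ₃) ?_)
    (fun x hx => criticalFun_eq_sub hx) one_pos
    (.congr ?_ fun x hx => criticalFun_sub_comp_add_one hx)
  · exact .div_add_pow (.add (uniqueDiffOn_Ioi 0) (.div_pow (.const (by norm_num)) le_rfl 2)
      (.div_pow (.const zero_le_one) le_rfl 4)) (by norm_num) two_ne_zero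
  · exact .mul (uniqueDiffOn_Ioi 0) (.div_pow (.const zero_le_two) le_rfl 2)
      completelyMonotonicOn_shiftFactor

theorem pow_three_mul_criticalFun (hx : 0 < x) :
    x ^ 3 * criticalFun x = (11 * x + 24) / (12 * (x + 1) ^ 2) - 2 + 2 * x * hurwitzSum 2 (x + 1) +
      x ^ 3 * hurwitzSum 2 (x + 1) ^ 2 - 2 * x ^ 3 * hurwitzSum 3 (x + 1) := by
  rw [criticalFun, hurwitzSum_eq_inv_pow_add one_lt_two hx,
    hurwitzSum_eq_inv_pow_add (by norm_num : 1 < 3) hx]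
  field_simp
  ring

theorem tendsto_pow_three_mul_criticalFun :
    Tendsto (fun x => x ^ 3 * criticalFun x) (𝓝[>] 0) (𝓝 0) := by
  have hcont {s : ℕ} (hs : 1 < s) : ContinuousAt (fun x => hurwitzSum s (x + 1)) 0 :=
    ((hasDerivAt_hurwitzSum hs (by norm_num : (0 : ℝ) < 0 + 1)).comp_add_const 0 1).continuousAt
  have := hcont one_lt_two
  have := hcont (by norm_num : 1 < 3)
  have hlim : ContinuousAt (fun x => (11 * x + 24) / (12 * (x + 1) ^ 2) - 2 +
      2 * x * hurwitzSum 2 (x + 1) + x ^ 3 * hurwitzSum 2 (x + 1) ^ 2 -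
      2 * x ^ 3 * hurwitzSum 3 (x + 1)) 0 := by
    fun_prop (disch := norm_num)
  refine Tendsto.congr' ?_ ((hlim.tendsto.mono_left nhdsWithin_le_nhds).trans_eq ?_)
  · filter_upwards [self_mem_nhdsWithin] with x hx using (pow_three_mul_criticalFun hx).symm
  · norm_num

theorem deriv_digamma_sq_add_sub_eq (lam : ℝ) (hx : 0 < x) :
    deriv digamma x ^ 2 + deriv (deriv digamma) x -
        (x ^ 2 + lam * x + 12) / (12 * x ^ 4 * (x + 1) ^ 2) =
      criticalFun x + -lam / 12 / x ^ 3 / (x + 1) ^ 2 := by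
  rw [deriv_deriv_digamma hx, deriv_digamma hx, criticalFun]
  field_simp
  ring

end Critical

theorem nonpos_of_forall_criticalFun_add_nonneg {lam : ℝ}
    (h : ∀ x > 0, 0 ≤ criticalFun x + -lam / 12 / x ^ 3 / (x + 1) ^ 2) : lam ≤ 0 := by
  have hrat : ContinuousAt (fun x : ℝ => -lam / 12 / (x + 1) ^ 2) 0 := by
    fun_prop (disch := norm_num)
  have hlim := tendsto_pow_three_mul_criticalFun.add
    (hrat.tendsto.mono_left nhdsWithin_le_nhds)
  have hnonneg : 0 ≤ 0 + -lam / 12 / (0 + 1) ^ 2 := by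
    refine ge_of_tendsto hlim ?_
    filter_upwards [self_mem_nhdsWithin] with x (hx : 0 < x)
    refine (mul_nonneg (pow_pos hx 3).le (h x hx)).trans_eq ?_
    field_simp
  linarith

theorem stmt_0 (lam : ℝ) :
    CompletelyMonotonicOn
      (fun x : ℝ => (deriv digamma x) ^ 2 + deriv (deriv digamma) x -
        (x ^ 2 + lam * x + 12) / (12 * x ^ 4 * (x + 1) ^ 2))
      (Set.Ioi 0) ↔ lam ≤ 0 := by
  refine ⟨fun h => ?_, fun hlam => ?_⟩
  · exact nonpos_of_forall_criticalFun_add_nonneg fun x hx =>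
      deriv_digamma_sq_add_sub_eq lam hx ▸ h.nonneg hx
  · have hrat : CompletelyMonotonicOn (fun x => -lam / 12 / x ^ 3 / (x + 1) ^ 2) (Ioi 0) :=
      .div_add_pow (.div_pow (.const (by linarith)) le_rfl 3) (by norm_num) 2
    exact .congr (.add (uniqueDiffOn_Ioi 0) completelyMonotonicOn_criticalFun hrat)
      fun x hx => deriv_digamma_sq_add_sub_eq lam hx
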